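/- Null space of the 1st level general fractional derivative: let (κ, k₁, k₂) ∈ L₁¹ and f ∈ C¹_{-1,(k₂)}(0,∞). Then ( 1L D_{(k₁,k₂)} f)(t) = 0 for all t > 0 if and only if there exists a constant C ∈ ℝ such that f(t) = C · (κ * k₁)(t) for all t > 0. -/

import Mathlib

open Real Filter MeasureTheory intervalIntegral

/-- The Laplace convolution `(f * g)(t) = ∫_0^t f(t-τ) g(τ) dτ`. -/
noncomputable def lconv (f g : ℝ → ℝ) : ℝ → ℝ :=
  fun t => ∫ τ in (0:ℝ)..t, f (t - τ) * g τ

/-- The space `C_{-1}(0,∞)`: functions representable as `t^p f₁(t)` with `p > -1`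
and `f₁` continuous on `[0,∞)`. -/
def CMinusOne (f : ℝ → ℝ) : Prop :=
  ∃ p : ℝ, p > -1 ∧ ∃ f₁ : ℝ → ℝ, ContinuousOn f₁ (Set.Ici 0) ∧
    ∀ t > (0:ℝ), f t = t ^ p * f₁ t


/-- The class `L₁¹` of triples of 1st level kernels: `κ, k₁, k₂ ∈ C_{-1}(0,∞)` with
`(κ * k₁ * k₂)(t) = 1` for all `t > 0`. -/
def FirstLevelKernels (κ k₁ k₂ : ℝ → ℝ) : Prop :=
  CMinusOne κ ∧ CMinusOne k₁ ∧ CMinusOne k₂ ∧ ∀ t > (0:ℝ), lconv κ (lconv k₁ k₂) t = 1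

/-!
On `C_{-1}` the operation `*` is internal, commutative and associative: substituting `τ = t s` turns
`t^p a(t) * t^q b(t)` into `t^(p+q+1) ∫_0^1 (1-s)^p s^q a(t(1-s)) b(ts) ds`, a Beta-weighted average
that is continuous up to `t = 0`, and associativity is Fubini for the convolution on the line of
the extensions by zero. Convolving with `1` is integration from `0`, which is injective on
`C_{-1}`, so every factor of a product equal to `1` can be cancelled. Hence `k₁ * (k₂ * f)' = 0`
means `(k₂ * f)' = 0`, that is, `k₂ * f = C = k₂ * (C κ * k₁)`, and cancelling `k₂` determines `f`.
-/

section

open Set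
open scoped Convolution

section IntervalIntegral

lemma intervalIntegrable_one_sub_rpow_mul_rpow {p q : ℝ} (hp : -1 < p) (hq : -1 < q) :
    IntervalIntegrable (fun s : ℝ => (1 - s) ^ p * s ^ q) volume 0 1 := by
  have left_half (p : ℝ) {q : ℝ} (hq : -1 < q) :
      IntervalIntegrable (fun s : ℝ => (1 - s) ^ p * s ^ q) volume 0 (1 / 2) := by
    refine (intervalIntegrable_rpow' hq).continuousOn_mul
      (ContinuousOn.rpow_const (by fun_prop) fun s hs => Or.inl ?_)
    rw [uIcc_of_le (by norm_num)] at hs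
    linarith [hs.2]
  have right_half : IntervalIntegrable (fun s : ℝ => (1 - s) ^ p * s ^ q) volume 1 (1 / 2) := by
    convert! (left_half q hp).comp_sub_left 1 using 1
    · simp only [sub_sub_cancel, mul_comm]
    · norm_num
    · norm_num
  exact (left_half p hq).trans right_half.symm

lemma continuous_intervalIntegral_smul {X E : Type*} [TopologicalSpace X]
    [FirstCountableTopology X] [WeaklyLocallyCompactSpace X] [NormedAddCommGroup E]
    [NormedSpace ℝ E] {μ : Measure ℝ} {a b : ℝ} {w : ℝ → ℝ} {F : X → ℝ → E}
    (hw : IntervalIntegrable w μ a b) (hF : Continuous (Function.uncurry F)) :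
    Continuous fun x => ∫ s in a..b, w s • F x s ∂μ := by
  refine continuous_iff_continuousAt.2 fun x₀ => ?_
  obtain ⟨K, hK, hKx₀⟩ := exists_compact_mem_nhds x₀
  obtain ⟨M, hM⟩ := (hK.prod (isCompact_uIcc (a := a) (b := b))).exists_bound_of_continuousOn
    hF.continuousOn
  refine continuousAt_of_dominated_interval (bound := fun s => ‖w s‖ * M)
    (Eventually.of_forall fun x => ?_) ?_ (hw.norm.mul_const M)
    (Eventually.of_forall fun s _ => by fun_prop)
  · exact (hw.smul_continuousOn (hF.uncurry_left x).continuousOn).def'.aestronglyMeasurable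
  · filter_upwards [hKx₀] with x hx
    refine Eventually.of_forall fun s hs => ?_
    rw [norm_smul]
    exact mul_le_mul_of_nonneg_left (hM (x, s) ⟨hx, uIoc_subset_uIcc hs⟩) (norm_nonneg _)

lemma eqOn_deriv_zero_iff_exists_eqOn_const {𝕜 G : Type*} [RCLike 𝕜] [NormedAddCommGroup G]
    [NormedSpace 𝕜 G] {s : Set 𝕜} {F : 𝕜 → G} (hs : IsOpen s) (hs' : IsPreconnected s)
    (hF : DifferentiableOn 𝕜 F s) :
    EqOn (deriv F) 0 s ↔ ∃ c, EqOn F (Function.const 𝕜 c) s := by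
  refine ⟨fun h => hs.exists_is_const_of_deriv_eq_zero hs' hF h, ?_⟩
  rintro ⟨c, hc⟩ x hx
  exact (hc.deriv hs hx).trans (deriv_const x c)

end IntervalIntegral

section LaplaceConvolution

variable {f f' g g' : ℝ → ℝ}

lemma lconv_comm (f g : ℝ → ℝ) : lconv f g = lconv g f := by
  funext t
  calc lconv f g t = ∫ τ in (t - t)..(t - 0), f τ * g (t - τ) := by
        rw [← integral_comp_sub_left (fun τ => f τ * g (t - τ)) t]
        simp only [lconv, sub_sub_cancel]
    _ = lconv g f t := by simp only [lconv, sub_self, sub_zero, mul_comm]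

lemma lconv_congr (hf : EqOn f f' (Ioi 0)) (hg : EqOn g g' (Ioi 0)) :
    EqOn (lconv f g) (lconv f' g') (Ioi 0) := by
  intro t ht
  refine integral_congr_uIoo fun τ hτ => ?_
  rw [uIoo_of_le (mem_Ioi.1 ht).le] at hτ
  simp only [hf (sub_pos.2 hτ.2), hg hτ.1]

lemma lconv_zero (f : ℝ → ℝ) : lconv f 0 = 0 := by
  funext t
  simp [lconv]

lemma lconv_smul (c : ℝ) (f g : ℝ → ℝ) : lconv f (c • g) = c • lconv f g := by
  funext t
  simp [lconv, mul_left_comm]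

lemma lconv_one (g : ℝ → ℝ) (t : ℝ) : lconv 1 g t = ∫ τ in (0 : ℝ)..t, g τ := by
  simp [lconv]

lemma lconv_eq_mul_integral (f g : ℝ → ℝ) (t : ℝ) :
    lconv f g t = t * ∫ s in (0 : ℝ)..1, f (t * (1 - s)) * g (t * s) := by
  simpa [lconv, mul_sub] using
    (smul_integral_comp_mul_left (a := 0) (b := 1) (fun τ => f (t - τ) * g τ) t).symm

lemma indicator_lconv (f g : ℝ → ℝ) :
    (Ioi 0).indicator (lconv f g) =
      (Ioi 0).indicator f ⋆[ContinuousLinearMap.mul ℝ ℝ, volume] (Ioi 0).indicator g := by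
  calc (Ioi 0).indicator (lconv f g)
      = posConvolution f g (ContinuousLinearMap.mul ℝ ℝ) := by
        rw [lconv_comm, posConvolution]
        unfold lconv
        simp only [ContinuousLinearMap.mul_apply', mul_comm]
    _ = _ := posConvolution_eq_convolution_indicator f g (ContinuousLinearMap.mul ℝ ℝ)

end LaplaceConvolution

section CMinusOne

variable {f g h : ℝ → ℝ}

lemma CMinusOne.exists_continuous (hf : CMinusOne f) :
    ∃ p : ℝ, p > -1 ∧ ∃ f₁ : ℝ → ℝ, Continuous f₁ ∧ EqOn f (fun t => t ^ p * f₁ t) (Ioi 0) := by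
  obtain ⟨p, hp, f₁, hf₁, hf⟩ := hf
  refine ⟨p, hp, fun t => f₁ (max t 0),
    hf₁.comp_continuous (by fun_prop) fun _ => mem_Ici.2 (le_max_right _ _), fun t ht => ?_⟩
  simp only [hf t ht, max_eq_left (mem_Ioi.1 ht).le]

lemma CMinusOne.zero : CMinusOne 0 :=
  ⟨0, by norm_num, 0, continuousOn_const, by simp⟩

lemma CMinusOne.const_smul (c : ℝ) (hf : CMinusOne f) : CMinusOne (c • f) := by
  obtain ⟨p, hp, f₁, hf₁, hf⟩ := hf
  refine ⟨p, hp, c • f₁, hf₁.const_smul c, fun t ht => ?_⟩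
  simp only [Pi.smul_apply, smul_eq_mul, hf t ht, mul_left_comm]

lemma CMinusOne.abs (hf : CMinusOne f) : CMinusOne |f| := by
  obtain ⟨p, hp, f₁, hf₁, hf⟩ := hf
  refine ⟨p, hp, |f₁|, hf₁.abs, fun t ht => ?_⟩
  rw [Pi.abs_apply, Pi.abs_apply, hf t ht, abs_mul, abs_of_pos (rpow_pos_of_pos ht p)]

lemma CMinusOne.continuousOn (hf : CMinusOne f) : ContinuousOn f (Ioi 0) := by
  obtain ⟨p, -, f₁, hf₁, hf⟩ := hf.exists_continuous
  refine ContinuousOn.congr (ContinuousOn.mul ?_ hf₁.continuousOn) hf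
  exact continuousOn_id.rpow_const fun t ht => Or.inl (mem_Ioi.1 ht).ne'

lemma CMinusOne.intervalIntegrable (hf : CMinusOne f) {t : ℝ} (ht : 0 ≤ t) :
    IntervalIntegrable f volume 0 t := by
  obtain ⟨p, hp, f₁, hf₁, hf⟩ := hf.exists_continuous
  refine ((intervalIntegrable_rpow' hp).mul_continuousOn hf₁.continuousOn).congr_uIoo ?_
  rw [uIoo_of_le ht]
  exact hf.symm.mono Ioo_subset_Ioi_self

lemma CMinusOne.hasDerivAt_lconv_one (hg : CMinusOne g) {t : ℝ} (ht : 0 < t) :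
    HasDerivAt (lconv 1 g) (g t) t := by
  rw [funext (lconv_one g)]
  exact integral_hasDerivAt_right (hg.intervalIntegrable ht.le)
    (hg.continuousOn.stronglyMeasurableAtFilter isOpen_Ioi t ht)
    (hg.continuousOn.continuousAt (Ioi_mem_nhds ht))

lemma CMinusOne.eqOn_of_lconv_one (hg : CMinusOne g) (hh : CMinusOne h)
    (hgh : EqOn (lconv 1 g) (lconv 1 h) (Ioi 0)) : EqOn g h (Ioi 0) := fun _ ht =>
  (hg.hasDerivAt_lconv_one ht).unique
    ((hh.hasDerivAt_lconv_one ht).congr_of_eventuallyEq (hgh.eventuallyEq_of_mem (Ioi_mem_nhds ht)))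

lemma rescaled_integrand_eqOn_rpow_mul {a b : ℝ → ℝ} {p q t : ℝ} (ht : 0 < t)
    (hf : EqOn f (fun t => t ^ p * a t) (Ioi 0)) (hg : EqOn g (fun t => t ^ q * b t) (Ioi 0)) :
    EqOn (fun s => f (t * (1 - s)) * g (t * s))
      (fun s => t ^ (p + q) * (((1 - s) ^ p * s ^ q) * (a (t * (1 - s)) * b (t * s))))
      (uIoo 0 1) := by
  rw [uIoo_of_le zero_le_one]
  rintro s ⟨hs₀, hs₁⟩
  have hs₁' : 0 < 1 - s := sub_pos.2 hs₁
  simp only [hf (mem_Ioi.2 (mul_pos ht hs₁')), hg (mem_Ioi.2 (mul_pos ht hs₀)),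
    mul_rpow ht.le hs₁'.le, mul_rpow ht.le hs₀.le, rpow_add ht]
  ring

lemma CMinusOne.intervalIntegrable_mul_comp_sub (hf : CMinusOne f) (hg : CMinusOne g) {t : ℝ}
    (ht : 0 < t) : IntervalIntegrable (fun τ => f τ * g (t - τ)) volume 0 t := by
  obtain ⟨p, hp, a, ha, hf⟩ := hf.exists_continuous
  obtain ⟨q, hq, b, hb, hg⟩ := hg.exists_continuous
  have scaled : IntervalIntegrable (fun s => g (t * (1 - s)) * f (t * s)) volume 0 1 := by
    refine IntervalIntegrable.congr_uIoo ?_ (rescaled_integrand_eqOn_rpow_mul ht hg hf).symm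
    exact ((intervalIntegrable_one_sub_rpow_mul_rpow hq hp).mul_continuousOn
      (Continuous.continuousOn (by fun_prop))).const_mul _
  simpa [mul_sub, mul_inv_cancel_left₀ ht.ne', mul_comm (f _)] using scaled.comp_mul_left (c := t⁻¹)

lemma CMinusOne.lconv (hf : CMinusOne f) (hg : CMinusOne g) : CMinusOne (lconv f g) := by
  obtain ⟨p, hp, a, ha, hf⟩ := hf.exists_continuous
  obtain ⟨q, hq, b, hb, hg⟩ := hg.exists_continuous
  have continuous_factor : Continuous fun t =>
      ∫ s in (0 : ℝ)..1, ((1 - s) ^ p * s ^ q) • (a (t * (1 - s)) * b (t * s)) :=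
    continuous_intervalIntegral_smul (F := fun t s => a (t * (1 - s)) * b (t * s))
      (intervalIntegrable_one_sub_rpow_mul_rpow hp hq) (by fun_prop)
  refine ⟨p + q + 1, by linarith, _, continuous_factor.continuousOn, fun t ht => ?_⟩
  rw [lconv_eq_mul_integral, integral_congr_uIoo (rescaled_integrand_eqOn_rpow_mul ht hf hg),
    intervalIntegral.integral_const_mul, rpow_add_one ht.ne']
  simp only [smul_eq_mul]
  ring

lemma CMinusOne.aestronglyMeasurable_indicator (hf : CMinusOne f) :
    AEStronglyMeasurable ((Ioi 0).indicator f) volume :=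
  (aestronglyMeasurable_indicator_iff measurableSet_Ioi).2
    (hf.continuousOn.aestronglyMeasurable measurableSet_Ioi)

lemma CMinusOne.convolutionExists_indicator (hf : CMinusOne f) (hg : CMinusOne g) :
    ConvolutionExists ((Ioi 0).indicator f) ((Ioi 0).indicator g)
      (ContinuousLinearMap.mul ℝ ℝ) volume := by
  intro t
  have integrand_eq : (fun τ => (Ioi 0).indicator f τ * (Ioi 0).indicator g (t - τ)) =
      (Ioo 0 t).indicator fun τ => f τ * g (t - τ) := by
    funext τ
    by_cases h₀ : 0 < τ <;> by_cases hₜ : τ < t <;> simp [h₀, hₜ]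
  simp only [ConvolutionExistsAt, ContinuousLinearMap.mul_apply']
  rw [integrand_eq, integrable_indicator_iff measurableSet_Ioo]
  rcases le_or_gt t 0 with ht | ht
  · simp [Ioo_eq_empty_of_le ht]
  · exact (intervalIntegrable_iff_integrableOn_Ioo_of_le ht.le).1
      (hf.intervalIntegrable_mul_comp_sub hg ht)

lemma lconv_assoc (hf : CMinusOne f) (hg : CMinusOne g) (hh : CMinusOne h) :
    EqOn (lconv (lconv f g) h) (lconv f (lconv g h)) (Ioi 0) := by
  intro t ht
  have norm_indicator (u : ℝ → ℝ) :
      (fun x => ‖(Ioi 0).indicator u x‖) = (Ioi 0).indicator |u| :=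
    funext fun x => norm_indicator_eq_indicator_norm u x
  have assoc := convolution_assoc (ContinuousLinearMap.mul ℝ ℝ) (ContinuousLinearMap.mul ℝ ℝ)
    (ContinuousLinearMap.mul ℝ ℝ) (ContinuousLinearMap.mul ℝ ℝ) mul_assoc (x₀ := t)
    hf.aestronglyMeasurable_indicator hg.aestronglyMeasurable_indicator
    hh.aestronglyMeasurable_indicator
    (Eventually.of_forall (hf.convolutionExists_indicator hg))
    (by
      simp only [norm_indicator]
      exact Eventually.of_forall (hg.abs.convolutionExists_indicator hh.abs))
    (by
      simp only [norm_indicator, ← indicator_lconv]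
      exact hf.abs.convolutionExists_indicator (hg.abs.lconv hh.abs) t)
  simpa only [← indicator_lconv, indicator_of_mem ht] using assoc

end CMinusOne

section Kernels

variable {κ k k₁ k₂ g h : ℝ → ℝ}

lemma eqOn_lconv_iff_of_lconv_eqOn_one (hκ : CMinusOne κ) (hk : CMinusOne k)
    (hone : EqOn (lconv κ k) 1 (Ioi 0)) (hg : CMinusOne g) (hh : CMinusOne h) :
    EqOn (lconv k g) (lconv k h) (Ioi 0) ↔ EqOn g h (Ioi 0) := by
  have lconv_lconv {u : ℝ → ℝ} (hu : CMinusOne u) :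
      EqOn (lconv κ (lconv k u)) (lconv 1 u) (Ioi 0) :=
    (lconv_assoc hκ hk hu).symm.trans (lconv_congr hone (eqOn_refl u _))
  refine ⟨fun hgh => hg.eqOn_of_lconv_one hh ?_, lconv_congr (eqOn_refl k _)⟩
  exact (lconv_lconv hg).symm.trans ((lconv_congr (eqOn_refl κ _) hgh).trans (lconv_lconv hh))

lemma FirstLevelKernels.swap (hker : FirstLevelKernels κ k₁ k₂) : FirstLevelKernels κ k₂ k₁ := by
  obtain ⟨hκ, hk₁, hk₂, hone⟩ := hker
  exact ⟨hκ, hk₂, hk₁, lconv_comm k₁ k₂ ▸ hone⟩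

lemma FirstLevelKernels.eqOn_lconv_iff (hker : FirstLevelKernels κ k₁ k₂)
    (hg : CMinusOne g) (hh : CMinusOne h) :
    EqOn (lconv k₂ g) (lconv k₂ h) (Ioi 0) ↔ EqOn g h (Ioi 0) := by
  obtain ⟨hκ, hk₁, hk₂, hone⟩ := hker
  exact eqOn_lconv_iff_of_lconv_eqOn_one (hκ.lconv hk₁) hk₂
    ((lconv_assoc hκ hk₁ hk₂).trans hone) hg hh

lemma FirstLevelKernels.lconv_smul_eqOn_const (hker : FirstLevelKernels κ k₁ k₂) (c : ℝ) :
    EqOn (lconv k₂ (c • lconv κ k₁)) (Function.const ℝ c) (Ioi 0) := by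
  obtain ⟨hκ, hk₁, hk₂, hone⟩ := hker
  intro t ht
  rw [lconv_smul, lconv_comm, Pi.smul_apply, lconv_assoc hκ hk₁ hk₂ ht, hone t ht,
    smul_eq_mul, mul_one, Function.const_apply]

lemma FirstLevelKernels.lconv_eqOn_const_iff (hker : FirstLevelKernels κ k₁ k₂)
    (hg : CMinusOne g) (c : ℝ) :
    EqOn (lconv k₂ g) (Function.const ℝ c) (Ioi 0) ↔ EqOn g (c • lconv κ k₁) (Ioi 0) := by
  have lconv_smul_eq := hker.lconv_smul_eqOn_const c
  rw [← hker.eqOn_lconv_iff hg ((hker.1.lconv hker.2.1).const_smul c)]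
  exact ⟨fun hgc => hgc.trans lconv_smul_eq.symm, fun hgc => hgc.trans lconv_smul_eq⟩

end Kernels

end

/-- Null space of the 1st level GFD: for `(κ, k₁, k₂) ∈ L₁¹` and
`f ∈ C¹_{-1,(k₂)}(0,∞)`, one has `( 1L D_{(k₁,k₂)} f)(t) = 0` for all `t > 0` if
and only if `f(t) = C (κ * k₁)(t)` for some constant `C ∈ ℝ` and all `t > 0`. -/
theorem null_space_1L_GFD (κ k₁ k₂ f : ℝ → ℝ)
    (hker : FirstLevelKernels κ k₁ k₂) (hf : CMinusOne f)
    (hdiff : ∀ t > (0:ℝ), DifferentiableAt ℝ (lconv k₂ f) t)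
    (hlim : ∃ c : ℝ, Tendsto (lconv k₂ f) (nhdsWithin 0 (Set.Ioi 0)) (nhds c))
    (hder : CMinusOne (deriv (lconv k₂ f))) :
    (∀ t > (0:ℝ), lconv k₁ (deriv (lconv k₂ f)) t = 0) ↔
      ∃ C : ℝ, ∀ t > (0:ℝ), f t = C * lconv κ k₁ t := by
  change Set.EqOn (lconv k₁ (deriv (lconv k₂ f))) 0 (Set.Ioi 0) ↔
    ∃ C : ℝ, Set.EqOn f (C • lconv κ k₁) (Set.Ioi 0)
  calc Set.EqOn (lconv k₁ (deriv (lconv k₂ f))) 0 (Set.Ioi 0)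
      ↔ Set.EqOn (deriv (lconv k₂ f)) 0 (Set.Ioi 0) := by
        rw [← hker.swap.eqOn_lconv_iff hder CMinusOne.zero, lconv_zero]
    _ ↔ ∃ C, Set.EqOn (lconv k₂ f) (Function.const ℝ C) (Set.Ioi 0) :=
        eqOn_deriv_zero_iff_exists_eqOn_const isOpen_Ioi isPreconnected_Ioi
          fun t ht => (hdiff t ht).differentiableWithinAt
    _ ↔ ∃ C : ℝ, Set.EqOn f (C • lconv κ k₁) (Set.Ioi 0) :=
        exists_congr (hker.lconv_eqOn_const_iff hf)
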